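/- For a nonzero icosian p ∈ 𝕀, one has pLp̃ = L (where pLp̃ = {p x p̃ : x ∈ L}) if and only if p is a unit of the ring 𝕀, equivalently if and only if N(nr(p)) = ±1, where N(α) = |αα′| is the field norm of K. -/

import Mathlib

/-!
The twist `q ↦ q̃` is a Galois-semilinear anti-automorphism of `ℍ(K)` which preserves the icosian
ring `𝕀`, and `L` is precisely its fixed lattice `{x ∈ 𝕀 : x̃ = x}` (`mem_Lsub_iff`). Hence
`p L p̃ ⊆ L` for every icosian `p`.

If `p` is a unit of `𝕀` with inverse `r`, then also `r L r̃ ⊆ L`, and conjugating back gives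
`L ⊆ p L p̃`. Conversely, if `p L p̃ = L`, then `1 ∈ L` is of the form `p x p̃` with `x ∈ L`, and
`x p̃` is an icosian inverse of `p`; no determinant is needed.

A unit has `N(nr p) = 1` because `N ∘ nr` is multiplicative with integral values. Conversely, if
`nr(p) nr(p)′ = ±1`, then `± nr(p)′ p̄` is an icosian inverse of `p`.
-/

noncomputable section

open Quaternion

/-- Hamilton's quaternion algebra over `ℝ`. -/
abbrev HR := Quaternion ℝ

/-- the golden ratio `τ = (1+√5)/2`. -/
def tau : ℝ := (1 + Real.sqrt 5) / 2

/-- membership in the quadratic field `K = ℚ(√5)`, viewed inside `ℝ`. -/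
def inK (x : ℝ) : Prop := ∃ q r : ℚ, x = (q : ℝ) + (r : ℝ) * Real.sqrt 5

/-- membership in the ring of integers `𝔬 = ℤ[τ]` of `K`, viewed inside `ℝ`. -/
def inO (x : ℝ) : Prop := ∃ m n : ℤ, x = (m : ℝ) + (n : ℝ) * tau

/-- membership in `ℍ(K)`: all four components lie in `K`. -/
def inHK (q : HR) : Prop := inK q.re ∧ inK q.imI ∧ inK q.imJ ∧ inK q.imK

open scoped Classical in
/-- Galois conjugation `′` on `K = ℚ(√5)`, sending `q + r√5` to `q - r√5`
(extended by the identity off `K`; on `K` this is the usual Galois conjugation,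
since the representation `x = q + r√5` with `q, r ∈ ℚ` is unique). -/
noncomputable def gal (x : ℝ) : ℝ :=
  if h : ∃ q r : ℚ, x = (q : ℝ) + (r : ℝ) * Real.sqrt 5 then
    ((h.choose : ℝ) - (h.choose_spec.choose : ℝ) * Real.sqrt 5)
  else x

/-- the twist map `q = (a,b,c,d) ↦ q̃ = (a′,b′,d′,c′)` on `ℍ(K)`. -/
def twist (q : HR) : HR := ⟨gal q.re, gal q.imI, gal q.imK, gal q.imJ⟩

def v₁ : HR := ⟨1, 0, 0, 0⟩
def v₂ : HR := ⟨0, 1, 0, 0⟩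
def v₃ : HR := ⟨1/2, 1/2, 1/2, 1/2⟩
def v₄ : HR := ⟨(1 - tau)/2, tau/2, 0, 1/2⟩

/-- membership in the icosian ring `𝕀`: the `𝔬`-span of
`(1,0,0,0)`, `(0,1,0,0)`, `½(1,1,1,1)`, `½(1−τ,τ,0,1)`. -/
def inIcosian (q : HR) : Prop :=
  ∃ a b c d : ℝ, inO a ∧ inO b ∧ inO c ∧ inO d ∧
    q = a • v₁ + b • v₂ + c • v₃ + d • v₄

def w₁ : HR := ⟨1, 0, 0, 0⟩
def w₂ : HR := ⟨-(1/2), 1/2, 1/2, 1/2⟩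
def w₃ : HR := ⟨0, -1, 0, 0⟩
def w₄ : HR := ⟨0, 1/2, (tau - 1)/2, -(tau/2)⟩

/-- the lattice `L` (a copy of the root lattice `A₄`): the `ℤ`-span of
`(1,0,0,0)`, `½(−1,1,1,1)`, `(0,−1,0,0)`, `½(0,1,τ−1,−τ)`. -/
def Lsub : AddSubgroup HR :=
  (Submodule.span ℤ ({w₁, w₂, w₃, w₄} : Set HR)).toAddSubgroup

/-- `Λ` is a similar sublattice (SSL) of `L`: `Λ = α R(L) ⊆ L` for some
`α > 0` and a linear isometry `R` of `ℍ ≅ ℝ⁴`. -/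
def IsSSL (Λ : AddSubgroup HR) : Prop :=
  ∃ (α : ℝ) (R : HR ≃ₗᵢ[ℝ] HR), 0 < α ∧
    (Λ : Set HR) = (fun x => α • R x) '' (Lsub : Set HR) ∧ Λ ≤ Lsub

/-- `p` is an `𝕀`-primitive icosian: `p ∈ 𝕀` and whenever `α ∈ K` with
`α p ∈ 𝕀`, one has `α ∈ 𝔬`. -/
def IPrimitive (p : HR) : Prop :=
  inIcosian p ∧ ∀ α : ℝ, inK α → inIcosian (α • p) → inO α

/-- an icosian `q` is admissible when `|q q̃|` is a rational integer. -/
def Admissible (q : HR) : Prop := ∃ n : ℤ, ‖q * twist q‖ = (n : ℝ)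

lemma inO_add {x y : ℝ} (hx : inO x) (hy : inO y) : inO (x + y) := by
  obtain ⟨m, n, rfl⟩ := hx; obtain ⟨m', n', rfl⟩ := hy
  exact ⟨m + m', n + n', by push_cast; ring⟩

lemma inO_neg {x : ℝ} (hx : inO x) : inO (-x) := by
  obtain ⟨m, n, rfl⟩ := hx
  exact ⟨-m, -n, by push_cast; ring⟩

/-- the icosian ring `𝕀` as an additive subgroup of `ℍ`. -/
def Isub : AddSubgroup HR where
  carrier := {q | inIcosian q}
  zero_mem' := ⟨0, 0, 0, 0, ⟨0, 0, by push_cast; ring⟩, ⟨0, 0, by push_cast; ring⟩,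
    ⟨0, 0, by push_cast; ring⟩, ⟨0, 0, by push_cast; ring⟩, by simp⟩
  add_mem' := by
    rintro x y ⟨a, b, c, d, ha, hb, hc, hd, rfl⟩ ⟨a', b', c', d', ha', hb', hc', hd', rfl⟩
    exact ⟨a + a', b + b', c + c', d + d', inO_add ha ha', inO_add hb hb',
      inO_add hc hc', inO_add hd hd', by simp [add_smul]; abel⟩
  neg_mem' := by
    rintro x ⟨a, b, c, d, ha, hb, hc, hd, rfl⟩
    exact ⟨-a, -b, -c, -d, inO_neg ha, inO_neg hb, inO_neg hc, inO_neg hd,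
      by simp [neg_smul]; abel⟩

/-- the additive map `x ↦ p x p̃`. -/
def conjHom (p : HR) : HR →+ HR :=
  AddMonoidHom.mk' (fun x => p * x * twist p) (fun a b => by simp [mul_add, add_mul])

/-- the additive map `x ↦ (1/|q q̃|) · q x q̃`. -/
def cslHom (q : HR) : HR →+ HR :=
  AddMonoidHom.mk' (fun x => (1 / ‖q * twist q‖) • (q * x * twist q))
    (fun a b => by simp [mul_add, add_mul, smul_add])

/-- the subgroup `L ∩ (1/|q q̃|) · q L q̃` of `ℍ`. -/
def cslSub (q : HR) : AddSubgroup HR := Lsub ⊓ Lsub.map (cslHom q)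

/-- for a rotation `R`, the subgroup `Γ ∩ R(Γ)`. -/
def cslOf (Γ : AddSubgroup HR) (R : HR ≃ₗᵢ[ℝ] HR) : AddSubgroup HR :=
  Γ ⊓ Γ.map R.toLinearEquiv.toLinearMap.toAddMonoidHom

/-- the standard Euclidean inner product on `ℍ ≅ ℝ⁴`. -/
def dot (x y : HR) : ℝ := x.re * y.re + x.imI * y.imI + x.imJ * y.imJ + x.imK * y.imK

/-- the dual lattice `L* = {x ∈ ℍ : ⟨x|y⟩ ∈ ℤ for all y ∈ L}`. -/
def Ldual : AddSubgroup HR where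
  carrier := {x | ∀ y ∈ Lsub, ∃ n : ℤ, dot x y = n}
  zero_mem' := by intro y _; exact ⟨0, by simp [dot]⟩
  add_mem' := by
    intro a b ha hb y hy
    obtain ⟨m, hm⟩ := ha y hy; obtain ⟨n, hn⟩ := hb y hy
    refine ⟨m + n, ?_⟩
    have : dot (a + b) y = dot a y + dot b y := by simp [dot]; ring
    rw [this, hm, hn]; push_cast; ring
  neg_mem' := by
    intro a ha y hy
    obtain ⟨m, hm⟩ := ha y hy
    refine ⟨-m, ?_⟩
    have : dot (-a) y = -dot a y := by simp [dot]; ring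
    rw [this, hm]; push_cast; ring

/-! ### Arithmetic of `𝔬`, `K` and Galois conjugation -/

lemma sqrt5_sq : Real.sqrt 5 * Real.sqrt 5 = 5 := Real.mul_self_sqrt (by norm_num)

lemma tau_sq : tau ^ 2 = tau + 1 := by
  unfold tau
  linear_combination sqrt5_sq / 4

lemma irrational_sqrt5 : Irrational (Real.sqrt 5) := by
  have h : Nat.Prime 5 := by norm_num
  simpa using h.irrational_sqrt

/-- If `x + y√5 = 0` with `x, y ∈ ℚ`, then `y = 0`. -/
lemma rat_sqrt5_indep {x y : ℚ} (h : (x : ℝ) + y * Real.sqrt 5 = 0) : y = 0 := by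
  by_contra hy
  refine irrational_sqrt5 ⟨-x / y, ?_⟩
  have hy' : (y : ℝ) ≠ 0 := by exact_mod_cast hy
  push_cast
  field_simp
  linarith

/-- The value of `gal` does not depend on the representation chosen in its definition. -/
lemma gal_eq (q r : ℚ) : gal ((q : ℝ) + r * Real.sqrt 5) = q - r * Real.sqrt 5 := by
  have h : ∃ q' r' : ℚ, (q : ℝ) + r * Real.sqrt 5 = (q' : ℝ) + (r' : ℝ) * Real.sqrt 5 :=
    ⟨q, r, rfl⟩
  unfold gal
  rw [dif_pos h]
  have hs := h.choose_spec.choose_spec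
  generalize h.choose_spec.choose = r' at hs ⊢
  generalize h.choose = q' at hs ⊢
  have hr : r - r' = 0 := rat_sqrt5_indep (x := q - q') (by push_cast; linarith)
  obtain rfl : r = r' := by linarith
  linarith

lemma inK_add {x y : ℝ} (hx : inK x) (hy : inK y) : inK (x + y) := by
  obtain ⟨q, r, rfl⟩ := hx; obtain ⟨q', r', rfl⟩ := hy
  exact ⟨q + q', r + r', by push_cast; ring⟩

lemma inK_sub {x y : ℝ} (hx : inK x) (hy : inK y) : inK (x - y) := by
  obtain ⟨q, r, rfl⟩ := hx; obtain ⟨q', r', rfl⟩ := hy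
  exact ⟨q - q', r - r', by push_cast; ring⟩

lemma inK_mul {x y : ℝ} (hx : inK x) (hy : inK y) : inK (x * y) := by
  obtain ⟨q, r, rfl⟩ := hx; obtain ⟨q', r', rfl⟩ := hy
  exact ⟨q * q' + 5 * r * r', q * r' + r * q', by
    push_cast; linear_combination (r * r' : ℝ) * sqrt5_sq⟩

lemma gal_add {x y : ℝ} (hx : inK x) (hy : inK y) : gal (x + y) = gal x + gal y := by
  obtain ⟨q, r, rfl⟩ := hx; obtain ⟨q', r', rfl⟩ := hy
  have h := gal_eq (q + q') (r + r')
  push_cast at h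
  rw [gal_eq, gal_eq, ← sub_eq_zero, ← sub_eq_zero.mpr h]
  ring_nf

lemma gal_sub {x y : ℝ} (hx : inK x) (hy : inK y) : gal (x - y) = gal x - gal y := by
  have h := gal_add (inK_sub hx hy) hy
  rw [sub_add_cancel] at h
  linarith

lemma gal_mul {x y : ℝ} (hx : inK x) (hy : inK y) : gal (x * y) = gal x * gal y := by
  obtain ⟨q, r, rfl⟩ := hx; obtain ⟨q', r', rfl⟩ := hy
  have h := gal_eq (q * q' + 5 * r * r') (q * r' + r * q')
  push_cast at h
  have e : ((q : ℝ) + r * Real.sqrt 5) * (q' + r' * Real.sqrt 5) =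
      q * q' + 5 * r * r' + (q * r' + r * q') * Real.sqrt 5 := by
    linear_combination (r * r' : ℝ) * sqrt5_sq
  rw [e, h, gal_eq, gal_eq]
  linear_combination -(r * r' : ℝ) * sqrt5_sq

lemma gal_ratCast (q : ℚ) : gal (q : ℝ) = q := by simpa using gal_eq q 0

lemma inK_ratCast (q : ℚ) : inK (q : ℝ) := ⟨q, 0, by simp⟩

lemma inK_tau : inK tau := ⟨1 / 2, 1 / 2, by unfold tau; push_cast; ring⟩

lemma gal_tau : gal tau = 1 - tau := by
  have h := gal_eq (1 / 2) (1 / 2)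
  have e : tau = ((1 / 2 : ℚ) : ℝ) + ((1 / 2 : ℚ) : ℝ) * Real.sqrt 5 := by
    unfold tau; push_cast; ring
  rw [e, h]; push_cast; ring

lemma inO_inK {x : ℝ} (hx : inO x) : inK x := by
  obtain ⟨m, n, rfl⟩ := hx
  exact inK_add (by simpa using inK_ratCast m) (inK_mul (by simpa using inK_ratCast n) inK_tau)

/-- Galois conjugation on `𝔬`, in the basis `1, τ`. -/
lemma gal_int_tau (m n : ℤ) : gal ((m : ℝ) + n * tau) = m + n * (1 - tau) := by
  have hm := gal_ratCast m
  have hn := gal_ratCast n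
  have hm' := inK_ratCast m
  have hn' := inK_ratCast n
  push_cast at hm hn hm' hn'
  rw [gal_add hm' (inK_mul hn' inK_tau), gal_mul hn' inK_tau, hm, hn, gal_tau]

lemma inO_gal {x : ℝ} (hx : inO x) : inO (gal x) := by
  obtain ⟨m, n, rfl⟩ := hx
  exact ⟨m + n, -n, by rw [gal_int_tau]; push_cast; ring⟩

lemma inO_sub {x y : ℝ} (hx : inO x) (hy : inO y) : inO (x - y) := by
  rw [sub_eq_add_neg]; exact inO_add hx (inO_neg hy)

lemma inO_mul {x y : ℝ} (hx : inO x) (hy : inO y) : inO (x * y) := by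
  obtain ⟨m, n, rfl⟩ := hx; obtain ⟨m', n', rfl⟩ := hy
  exact ⟨m * m' + n * n', m * n' + n * m' + n * n', by
    push_cast; linear_combination (n * n' : ℝ) * tau_sq⟩

lemma inO_tau : inO tau := ⟨0, 1, by simp⟩

lemma inO_one : inO 1 := ⟨1, 0, by simp⟩

/-- The field norm takes rational integer values on `𝔬`. -/
lemma norm_int {x : ℝ} (hx : inO x) : ∃ k : ℤ, x * gal x = k := by
  obtain ⟨m, n, rfl⟩ := hx
  refine ⟨m ^ 2 + m * n - n ^ 2, ?_⟩
  rw [gal_int_tau]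
  push_cast
  linear_combination -(n : ℝ) ^ 2 * tau_sq

/-! ### The icosian ring -/

/-- The quaternion with coordinates `a, b, c, d` in the basis `v₁, v₂, v₃, v₄`. -/
def ico (a b c d : ℝ) : HR := a • v₁ + b • v₂ + c • v₃ + d • v₄

lemma ico_re (a b c d : ℝ) : (ico a b c d).re = a + c / 2 + d * ((1 - tau) / 2) := by
  simp only [ico, Quaternion.re_add, Quaternion.re_smul]
  simp [v₁, v₂, v₃, v₄]; ring

lemma ico_imI (a b c d : ℝ) : (ico a b c d).imI = b + c / 2 + d * (tau / 2) := by
  simp only [ico, Quaternion.imI_add, Quaternion.imI_smul]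
  simp [v₁, v₂, v₃, v₄]; ring

lemma ico_imJ (a b c d : ℝ) : (ico a b c d).imJ = c / 2 := by
  simp only [ico, Quaternion.imJ_add, Quaternion.imJ_smul]
  simp [v₁, v₂, v₃, v₄]; ring

lemma ico_imK (a b c d : ℝ) : (ico a b c d).imK = c / 2 + d / 2 := by
  simp only [ico, Quaternion.imK_add, Quaternion.imK_smul]
  simp [v₁, v₂, v₃, v₄]; ring

/-- The structure constants of `𝕀` in the basis `v₁, v₂, v₃, v₄`. -/
lemma ico_mul (a b c d e f g h : ℝ) :
    ico a b c d * ico e f g h = ico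
      (a * e - b * f - c * g - d * h + (tau - 1) * (b * g) - tau * (c * f) - tau * (d * f) - c * h)
      (a * f + b * e + (1 - tau) * (b * g) + tau * (c * f) + (1 - tau) * (b * h) + c * h - d * g)
      (a * g + c * e + c * g - b * g + c * f - b * h + d * f + (1 - tau) * (d * g))
      (a * h + d * e + (1 - tau) * (d * h) + (b * g + b * g) - (c * f + c * f) + b * h - d * f
        + (1 - tau) * (c * h) + tau * (d * g)) := by
  ext
  · simp only [Quaternion.re_mul, ico_re, ico_imI, ico_imJ, ico_imK]
    ring_nf; simp only [tau_sq]; ring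
  · simp only [Quaternion.imI_mul, ico_re, ico_imI, ico_imJ, ico_imK]
    ring_nf; simp only [tau_sq]; ring
  · simp only [Quaternion.imJ_mul, ico_re, ico_imI, ico_imJ, ico_imK]
    ring_nf
  · simp only [Quaternion.imK_mul, ico_re, ico_imI, ico_imJ, ico_imK]
    ring_nf

lemma inIcosian_mul {x y : HR} (hx : inIcosian x) (hy : inIcosian y) : inIcosian (x * y) := by
  obtain ⟨a, b, c, d, ha, hb, hc, hd, rfl⟩ := hx
  obtain ⟨e, f, g, h, he, hf, hg, hh, rfl⟩ := hy
  refine ⟨_, _, _, _, ?_, ?_, ?_, ?_, ico_mul a b c d e f g h⟩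
  all_goals apply_rules [inO_tau, inO_one, inO_sub, inO_add, inO_mul]
  exact inO_mul hd hg

lemma inIcosian_smul {t : ℝ} {x : HR} (ht : inO t) (hx : inIcosian x) : inIcosian (t • x) := by
  obtain ⟨a, b, c, d, ha, hb, hc, hd, rfl⟩ := hx
  exact ⟨t * a, t * b, t * c, t * d, inO_mul ht ha, inO_mul ht hb, inO_mul ht hc, inO_mul ht hd,
    by simp only [smul_add, smul_smul]⟩

lemma ico_star (a b c d : ℝ) :
    star (ico a b c d) = ico (a + c + (1 - tau) * d) (-b) (-c) (-d) := by
  ext <;> simp only [Quaternion.re_star, Quaternion.imI_star, Quaternion.imJ_star,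
    Quaternion.imK_star, ico_re, ico_imI, ico_imJ, ico_imK] <;> ring

lemma inIcosian_star {x : HR} (hx : inIcosian x) : inIcosian (star x) := by
  obtain ⟨a, b, c, d, ha, hb, hc, hd, rfl⟩ := hx
  refine ⟨_, _, _, _, ?_, ?_, ?_, ?_, ico_star a b c d⟩ <;>
    apply_rules [inO_tau, inO_one, inO_neg, inO_sub, inO_add, inO_mul]

lemma inO_normSq {x : HR} (hx : inIcosian x) : inO (Quaternion.normSq x) := by
  obtain ⟨a, b, c, d, ha, hb, hc, hd, rfl⟩ := hx
  have e : Quaternion.normSq (ico a b c d) = a * a + b * b + c * c + d * d + a * c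
      + (1 - tau) * (a * d) + b * c + tau * (b * d) + c * d := by
    rw [Quaternion.normSq_def', ico_re, ico_imI, ico_imJ, ico_imK]
    ring_nf; simp only [tau_sq]; ring
  change inO (Quaternion.normSq (ico a b c d))
  rw [e]
  apply_rules [inO_tau, inO_one, inO_sub, inO_add, inO_mul]

/-! ### The twist map and its fixed lattice -/

lemma inHK_of_inIcosian {x : HR} (hx : inIcosian x) : inHK x := by
  obtain ⟨a, b, c, d, ha, hb, hc, hd, rfl⟩ := hx
  have h2 : inK (2⁻¹) := by simpa using inK_ratCast 2⁻¹
  have ht := inK_tau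
  have h1 := inO_inK inO_one
  have ha := inO_inK ha
  have hb := inO_inK hb
  have hc := inO_inK hc
  have hd := inO_inK hd
  change inHK (ico a b c d)
  simp only [inHK, ico_re, ico_imI, ico_imJ, ico_imK, div_eq_mul_inv]
  refine ⟨?_, ?_, ?_, ?_⟩ <;> apply_rules [inK_sub, inK_add, inK_mul]

lemma twist_re (q : HR) : (twist q).re = gal q.re := rfl

lemma twist_imI (q : HR) : (twist q).imI = gal q.imI := rfl

lemma twist_imJ (q : HR) : (twist q).imJ = gal q.imK := rfl

lemma twist_imK (q : HR) : (twist q).imK = gal q.imJ := rfl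

/-- The twist is an anti-homomorphism: swapping `j` and `k` reverses products. -/
lemma twist_mul {x y : HR} (hx : inHK x) (hy : inHK y) : twist (x * y) = twist y * twist x := by
  obtain ⟨x0, x1, x2, x3⟩ := hx
  obtain ⟨y0, y1, y2, y3⟩ := hy
  ext
  · simp only [twist_re, twist_imI, twist_imJ, twist_imK, Quaternion.re_mul]
    rw [gal_sub, gal_sub, gal_sub, gal_mul, gal_mul, gal_mul, gal_mul]
    · ring
    all_goals apply_rules [inK_sub, inK_add, inK_mul]
  · simp only [twist_re, twist_imI, twist_imJ, twist_imK, Quaternion.imI_mul]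
    rw [gal_sub, gal_add, gal_add, gal_mul, gal_mul, gal_mul, gal_mul]
    · ring
    all_goals apply_rules [inK_sub, inK_add, inK_mul]
  · simp only [twist_re, twist_imI, twist_imJ, twist_imK, Quaternion.imJ_mul, Quaternion.imK_mul]
    rw [gal_add, gal_sub, gal_add, gal_mul, gal_mul, gal_mul, gal_mul]
    · ring
    all_goals apply_rules [inK_sub, inK_add, inK_mul]
  · simp only [twist_re, twist_imI, twist_imJ, twist_imK, Quaternion.imJ_mul, Quaternion.imK_mul]
    rw [gal_add, gal_add, gal_sub, gal_mul, gal_mul, gal_mul, gal_mul]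
    · ring
    all_goals apply_rules [inK_sub, inK_add, inK_mul]

/-- The twist is Galois-semilinear, fixes `v₁, v₂, v₃` and sends `v₄` to `v₃ - v₄`. -/
lemma twist_ico {a b c d : ℝ} (ha : inO a) (hb : inO b) (hc : inO c) (hd : inO d) :
    twist (ico a b c d) = ico (gal a) (gal b) (gal c + gal d) (-gal d) := by
  have h2 : inK (2⁻¹) := by simpa using inK_ratCast 2⁻¹
  have g2 : gal 2⁻¹ = 2⁻¹ := by simpa using gal_ratCast 2⁻¹
  have g1 : gal 1 = 1 := by simpa using gal_ratCast 1
  have ht := inK_tau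
  have h1 := inO_inK inO_one
  have ha := inO_inK ha
  have hb := inO_inK hb
  have hc := inO_inK hc
  have hd := inO_inK hd
  ext
  · simp only [twist_re, ico_re, div_eq_mul_inv]
    rw [gal_add, gal_add, gal_mul, gal_mul, gal_mul, gal_sub, g2, g1, gal_tau]
    · ring
    all_goals apply_rules [inK_sub, inK_add, inK_mul]
  · simp only [twist_imI, ico_imI, div_eq_mul_inv]
    rw [gal_add, gal_add, gal_mul, gal_mul, gal_mul, g2, gal_tau]
    · ring
    all_goals apply_rules [inK_sub, inK_add, inK_mul]
  · simp only [twist_imJ, ico_imJ, ico_imK, div_eq_mul_inv]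
    rw [gal_add, gal_mul, gal_mul, g2]
    · ring
    all_goals apply_rules [inK_sub, inK_add, inK_mul]
  · simp only [twist_imK, ico_imJ, ico_imK, div_eq_mul_inv]
    rw [gal_mul, g2]
    · ring
    all_goals apply_rules [inK_sub, inK_add, inK_mul]

lemma inIcosian_twist {x : HR} (hx : inIcosian x) : inIcosian (twist x) := by
  obtain ⟨a, b, c, d, ha, hb, hc, hd, rfl⟩ := hx
  exact ⟨_, _, _, _, inO_gal ha, inO_gal hb, inO_add (inO_gal hc) (inO_gal hd),
    inO_neg (inO_gal hd), twist_ico ha hb hc hd⟩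

lemma twist_twist {x : HR} (hx : inIcosian x) : twist (twist x) = x := by
  have key : ∀ {t : ℝ}, inO t → gal (gal t) = t := by
    rintro _ ⟨m, n, rfl⟩
    have h := gal_int_tau (m + n) (-n)
    push_cast at h
    rw [gal_int_tau, show (m : ℝ) + n * (1 - tau) = m + n + -n * tau by ring, h]
    ring
  obtain ⟨a, b, c, d, ha, hb, hc, hd, rfl⟩ := hx
  change twist (twist (ico a b c d)) = ico a b c d
  have hneg : gal (-gal d) = -d := by
    have h := gal_sub (x := 0) (by simpa using inK_ratCast 0) (inO_inK (inO_gal hd))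
    have h0 : gal 0 = 0 := by simpa using gal_ratCast 0
    rw [h0, key hd] at h
    simpa using h
  rw [twist_ico ha hb hc hd, twist_ico (inO_gal ha) (inO_gal hb)
    (inO_add (inO_gal hc) (inO_gal hd)) (inO_neg (inO_gal hd)), key ha, key hb, hneg,
    gal_add (inO_inK (inO_gal hc)) (inO_inK (inO_gal hd)), key hc, key hd]
  simp

/-- The basis `w₁, …, w₄` of `L` expressed in the basis `v₁, …, v₄` of `𝕀`. -/
lemma w_comb (k₁ k₂ k₃ k₄ : ℤ) :
    k₁ • w₁ + k₂ • w₂ + k₃ • w₃ + k₄ • w₄ =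
      ico (k₁ - k₂ - k₄) (-k₃ + 2 * k₄) (k₂ - k₄ + k₄ * tau) (k₄ - 2 * k₄ * tau) := by
  ext
  · rw [ico_re]; simp only [Quaternion.re_add, Quaternion.re_smul]; simp [w₁, w₂, w₃, w₄]
    linear_combination -(k₄ : ℝ) * tau_sq
  · rw [ico_imI]; simp only [Quaternion.imI_add, Quaternion.imI_smul]; simp [w₁, w₂, w₃, w₄]
    linear_combination (k₄ : ℝ) * tau_sq
  · rw [ico_imJ]; simp only [Quaternion.imJ_add, Quaternion.imJ_smul]; simp [w₁, w₂, w₃, w₄]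
    ring
  · rw [ico_imK]; simp only [Quaternion.imK_add, Quaternion.imK_smul]; simp [w₁, w₂, w₃, w₄]
    ring

lemma mem_Lsub_iff_comb (x : HR) :
    x ∈ Lsub ↔ ∃ k₁ k₂ k₃ k₄ : ℤ, x = k₁ • w₁ + k₂ • w₂ + k₃ • w₃ + k₄ • w₄ := by
  change x ∈ Submodule.span ℤ ({w₁, w₂, w₃, w₄} : Set HR) ↔ _
  simp only [Submodule.mem_span_insert, Submodule.mem_span_singleton]
  constructor
  · rintro ⟨k₁, _, ⟨k₂, _, ⟨k₃, _, ⟨k₄, rfl⟩, rfl⟩, rfl⟩, rfl⟩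
    exact ⟨k₁, k₂, k₃, k₄, by abel⟩
  · rintro ⟨k₁, k₂, k₃, k₄, rfl⟩
    exact ⟨k₁, _, ⟨k₂, _, ⟨k₃, _, ⟨k₄, rfl⟩, rfl⟩, rfl⟩, by abel⟩

/-- An equality `m + n τ = 0` with integers `m, n` forces `m = n = 0`. -/
lemma int_tau_indep {m n : ℤ} (h : (m : ℝ) + n * tau = 0) : m = 0 ∧ n = 0 := by
  have hn : (n / 2 : ℚ) = 0 := rat_sqrt5_indep (x := m + n / 2) (by
    rw [← h]; unfold tau; push_cast; ring)
  have hn' : n = 0 := by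
    have : (n : ℚ) = 0 := by linarith
    exact_mod_cast this
  subst hn'
  simpa using h

/-- `L` is the lattice of icosians fixed by the twist. -/
lemma mem_Lsub_iff (x : HR) : x ∈ Lsub ↔ inIcosian x ∧ twist x = x := by
  rw [mem_Lsub_iff_comb]
  constructor
  · rintro ⟨k₁, k₂, k₃, k₄, rfl⟩
    rw [w_comb]
    have e : ico (k₁ - k₂ - k₄) (-k₃ + 2 * k₄) (k₂ - k₄ + k₄ * tau) (k₄ - 2 * k₄ * tau) =
        ico ((k₁ - k₂ - k₄ : ℤ) + (0 : ℤ) * tau) ((-k₃ + 2 * k₄ : ℤ) + (0 : ℤ) * tau)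
          ((k₂ - k₄ : ℤ) + k₄ * tau) (k₄ + (-2 * k₄ : ℤ) * tau) := by
      push_cast; congr 1 <;> ring
    rw [e]
    refine ⟨⟨_, _, _, _, ⟨_, _, rfl⟩, ⟨_, _, rfl⟩, ⟨_, _, rfl⟩, ⟨_, _, rfl⟩, rfl⟩, ?_⟩
    rw [twist_ico ⟨_, _, rfl⟩ ⟨_, _, rfl⟩ ⟨_, _, rfl⟩ ⟨_, _, rfl⟩]
    simp only [gal_int_tau]
    push_cast; congr 1 <;> ring
  · rintro ⟨⟨_, _, _, _, ⟨a, a', rfl⟩, ⟨b, b', rfl⟩, ⟨c, c', rfl⟩, ⟨d, d', rfl⟩, rfl⟩, ht⟩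
    change twist (ico _ _ _ _) = ico _ _ _ _ at ht
    rw [twist_ico ⟨_, _, rfl⟩ ⟨_, _, rfl⟩ ⟨_, _, rfl⟩ ⟨_, _, rfl⟩] at ht
    simp only [gal_int_tau] at ht
    have hj := congrArg (fun q : HR => q.imJ) ht
    have hk := congrArg (fun q : HR => q.imK) ht
    have hr := congrArg (fun q : HR => q.re) ht
    have hi := congrArg (fun q : HR => q.imI) ht
    simp only [ico_re, ico_imI, ico_imJ, ico_imK] at hj hk hr hi
    -- For icosian coordinates `α, β, γ, δ` of a fixed point, comparison gives
    -- `δ = -gal δ`, `γ = gal γ + gal δ`, `α = gal α`, `β = gal β`.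
    have ed : (d : ℝ) + d' * tau + (d + d' * (1 - tau)) = 0 := by linarith
    have ec : (c : ℝ) + c' * tau = c + c' * (1 - tau) + (d + d' * (1 - tau)) := by linarith
    rw [ec] at hr hi
    have ed' : (d : ℝ) + d' * tau = -(d + d' * (1 - tau)) := by linarith
    rw [ed'] at hr hi
    have ea : (a : ℝ) + a' * (1 - tau) = a + a' * tau := by linarith
    have eb : (b : ℝ) + b' * (1 - tau) = b + b' * tau := by linarith
    obtain ⟨h1, -⟩ := int_tau_indep (m := 2 * d + d') (n := 0) (by push_cast; linarith)
    obtain ⟨-, h2⟩ := int_tau_indep (m := c' + d + d') (n := -(2 * c' + d')) (by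
      push_cast; linarith)
    obtain ⟨h3, -⟩ := int_tau_indep (m := a') (n := -2 * a') (by push_cast; linarith)
    obtain ⟨h4, -⟩ := int_tau_indep (m := b') (n := -2 * b') (by push_cast; linarith)
    obtain rfl : d' = -2 * d := by linarith
    obtain rfl : c' = d := by linarith
    subst h3 h4
    refine ⟨a + c + 2 * c', c + c', -b + 2 * c', c', ?_⟩
    rw [w_comb]
    change ico _ _ _ _ = ico _ _ _ _
    push_cast; congr 1 <;> ring

/-! ### Units -/

lemma one_mem_Lsub : (1 : HR) ∈ Lsub :=
  (mem_Lsub_iff_comb 1).mpr ⟨1, 0, 0, 0, by simp only [one_smul, zero_smul, add_zero]; rfl⟩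

lemma twist_one : twist 1 = 1 := ((mem_Lsub_iff 1).mp one_mem_Lsub).2

/-- `p L p̃ ⊆ L` for every icosian `p`. -/
lemma conj_mem_Lsub {p x : HR} (hp : inIcosian p) (hx : x ∈ Lsub) : p * x * twist p ∈ Lsub := by
  obtain ⟨hxI, hxt⟩ := (mem_Lsub_iff x).mp hx
  have hpx := inIcosian_mul hp hxI
  have htp := inIcosian_twist hp
  refine (mem_Lsub_iff _).mpr ⟨inIcosian_mul hpx htp, ?_⟩
  rw [twist_mul (inHK_of_inIcosian hpx) (inHK_of_inIcosian htp),
    twist_mul (inHK_of_inIcosian hp) (inHK_of_inIcosian hxI), twist_twist hp, hxt, mul_assoc]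

lemma image_eq_iff_unit {p : HR} (hpI : inIcosian p) :
    (fun x => p * x * twist p) '' (Lsub : Set HR) = (Lsub : Set HR) ↔
      ∃ r : HR, inIcosian r ∧ p * r = 1 ∧ r * p = 1 := by
  constructor
  · intro h
    obtain ⟨x, hx, hx1⟩ : (1 : HR) ∈ (fun x => p * x * twist p) '' (Lsub : Set HR) := by
      rw [h]; exact one_mem_Lsub
    have hpr : p * (x * twist p) = 1 := by rw [← mul_assoc]; exact hx1
    exact ⟨x * twist p, inIcosian_mul ((mem_Lsub_iff x).mp hx).1 (inIcosian_twist hpI), hpr,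
      mul_eq_one_comm.mp hpr⟩
  · rintro ⟨r, hr, hpr, hrp⟩
    apply Set.Subset.antisymm
    · rintro _ ⟨x, hx, rfl⟩
      exact conj_mem_Lsub hpI hx
    · intro x hx
      refine ⟨r * x * twist r, conj_mem_Lsub hr hx, ?_⟩
      have ht : twist r * twist p = 1 := by
        rw [← twist_mul (inHK_of_inIcosian hpI) (inHK_of_inIcosian hr), hpr, twist_one]
      calc p * (r * x * twist r) * twist p = (p * r) * x * (twist r * twist p) := by
            simp only [mul_assoc]
        _ = x := by rw [hpr, ht, one_mul, mul_one]

lemma unit_iff_norm {p : HR} (hpI : inIcosian p) :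
    (∃ r : HR, inIcosian r ∧ p * r = 1 ∧ r * p = 1) ↔
      |Quaternion.normSq p * gal (Quaternion.normSq p)| = 1 := by
  have hn := inO_normSq hpI
  constructor
  · rintro ⟨r, hr, hpr, -⟩
    have hm := inO_normSq hr
    have h1 : Quaternion.normSq p * Quaternion.normSq r = 1 := by
      rw [← map_mul, hpr, map_one]
    have h2 : gal (Quaternion.normSq p) * gal (Quaternion.normSq r) = 1 := by
      rw [← gal_mul (inO_inK hn) (inO_inK hm), h1]
      simpa using gal_ratCast 1
    obtain ⟨k, hk⟩ := norm_int hn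
    obtain ⟨l, hl⟩ := norm_int hm
    have hkl : (k : ℝ) * l = 1 := by
      rw [← hk, ← hl]
      linear_combination gal (Quaternion.normSq p) * gal (Quaternion.normSq r) * h1 + h2
    have hkl' : k * l = 1 := by exact_mod_cast hkl
    have hu : |k| = 1 := Int.isUnit_iff_abs_eq.mp (IsUnit.of_mul_eq_one l hkl')
    rw [hk]
    exact_mod_cast hu
  · intro h
    -- The sign `s` is the value of `nr(p) nr(p)′`.
    obtain ⟨s, hs, hsn⟩ : ∃ s : ℝ, inO s ∧
        s * gal (Quaternion.normSq p) * Quaternion.normSq p = 1 := by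
      rcases eq_or_eq_neg_of_abs_eq h with h | h
      · exact ⟨1, inO_one, by linarith⟩
      · exact ⟨-1, inO_neg inO_one, by linarith⟩
    have hpr : p * ((s * gal (Quaternion.normSq p)) • star p) = 1 := by
      rw [mul_smul_comm, Quaternion.self_mul_star, Quaternion.smul_coe, hsn, Quaternion.coe_one]
    exact ⟨(s * gal (Quaternion.normSq p)) • star p,
      inIcosian_smul (inO_mul hs (inO_gal hn)) (inIcosian_star hpI), hpr, mul_eq_one_comm.mp hpr⟩

/-- for a nonzero icosian `p`, `p L p̃ = L` iff `p` is a unit of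
the ring `𝕀`, equivalently iff `N(nr(p)) = ±1` where `N(α) = |α α′|`. -/
theorem pLp_eq_L_iff_unit (p : HR) (hp : p ≠ 0) (hpI : inIcosian p) :
    ((fun x => p * x * twist p) '' (Lsub : Set HR) = (Lsub : Set HR) ↔
      ∃ r : HR, inIcosian r ∧ p * r = 1 ∧ r * p = 1) ∧
    ((fun x => p * x * twist p) '' (Lsub : Set HR) = (Lsub : Set HR) ↔
      |Quaternion.normSq p * gal (Quaternion.normSq p)| = 1) :=
  ⟨image_eq_iff_unit hpI, (image_eq_iff_unit hpI).trans (unit_iff_norm hpI)⟩
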